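/- arXiv:2503.14548 — 2 statements merged into one kernel-verified Lean document; each statement's English description precedes it below -/
import Mathlib

section
/- There exists an absolute constant c > 0 such that for every positive integer n and every convex polytope P ⊂ ℝⁿ with nonempty interior that is symmetric about the origin (P = -P), one has log|V| · log|𝓕| ≥ c·n, where V is the set of vertices (0-dimensional faces) of P and 𝓕 is the set of facets ((n-1)-dimensional faces) of P. -/
open Set

/-- `F` is a `k`-dimensional face of the convex set `P`: a nonempty convex
extreme subset of `P` whose affine hull has dimension `k`. -/
def IsFaceOfDim {n : ℕ} (P F : Set (EuclideanSpace ℝ (Fin n))) (k : ℕ) : Prop :=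
  F.Nonempty ∧ Convex ℝ F ∧ IsExtreme ℝ P F ∧ Module.finrank ℝ (vectorSpan ℝ F) = k

/-!
The extreme points `v` of `P` and `w` of its polar satisfy `|w v| ≤ 1`. Choose probability weights
`p` on the `v` that maximise the determinant of `M = ∑ pᵥ v vᵀ`. Then `vᵀ M⁻¹ v ≤ n` for every `v`
by optimality, while `wᵀ M w ≤ 1` for every `w`. Write `M = Bᵀ B`, draw a random sign vector `e` and
set `x = Bᵀ e`, `f = B⁻¹ e`, so that `f x = n`. By subgaussian tail bounds and a union bound, some
`e` makes every `w x` at most of order `√(log |W|)` and every `f v` at most of order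
`√(n log |V|)`. The second bound puts a multiple of `f` into the polar, which is the convex hull of
the `w`, so the first one gives `n ≲ √(n log |V|) √(log |W|)`. Finally, at an extreme point `w` of
the polar of a polytope the active constraints span the space, so `P ∩ {w = 1}` is a facet that
determines `w`, and `|W|` is at most the number of facets.
-/

open MeasureTheory ProbabilityTheory
open scoped Matrix NNReal Topology

section RademacherSums

/-- The Rademacher distribution: the law of a uniformly random sign, as a measure on `ℝ`. -/
noncomputable def rademacher : Measure ℝ :=
  bernoulliMeasure 1 (-1) ⟨1 / 2, by norm_num, by norm_num⟩

instance : IsProbabilityMeasure rademacher := by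
  unfold rademacher; infer_instance

theorem ae_rademacher_eq_one_or_neg_one : ∀ᵐ x ∂rademacher, x = 1 ∨ x = -1 := by
  rw [ae_iff]
  exact bernoulliMeasure_apply_of_notMem_of_notMem _ (by measurability) (by simp) (by simp)

theorem integral_id_rademacher : ∫ x, x ∂rademacher = 0 := by
  rw [rademacher, integral_bernoulliMeasure]
  norm_num

theorem hasSubgaussianMGF_rademacher : HasSubgaussianMGF id 1 rademacher := by
  have h := hasSubgaussianMGF_of_mem_Icc_of_integral_eq_zero (μ := rademacher) (X := id)
    (a := -1) (b := 1) aemeasurable_id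
    (ae_rademacher_eq_one_or_neg_one.mono <| by rintro x (rfl | rfl) <;> norm_num)
    integral_id_rademacher
  convert h
  ext
  norm_num

theorem hasSubgaussianMGF_of_le {Ω : Type*} [MeasurableSpace Ω] {μ : Measure Ω} {X : Ω → ℝ}
    {c c' : ℝ≥0} (h : HasSubgaussianMGF X c μ) (hc : c ≤ c') : HasSubgaussianMGF X c' μ where
  integrable_exp_mul := h.integrable_exp_mul
  mgf_le t := (h.mgf_le t).trans <| by gcongr

variable {d : Type*} [Fintype d]

theorem hasSubgaussianMGF_eval_pi_rademacher (i : d) :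
    HasSubgaussianMGF (Function.eval i) 1 (Measure.pi fun _ : d => rademacher) := by
  refine .of_map (X := id) (measurable_pi_apply i).aemeasurable ?_
  rw [(measurePreserving_eval (fun _ => rademacher) i).map_eq]
  exact hasSubgaussianMGF_rademacher

theorem hasSubgaussianMGF_dotProduct {a : d → ℝ} {c : ℝ≥0} (hc : a ⬝ᵥ a ≤ c) :
    HasSubgaussianMGF (a ⬝ᵥ ·) c (Measure.pi fun _ : d => rademacher) := by
  have hindep : iIndepFun (fun i (e : d → ℝ) => a i * e i) (Measure.pi fun _ => rademacher) :=
    iIndepFun_pi (μ := fun _ => rademacher) (X := fun i x => a i * x) fun i => by fun_prop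
  refine hasSubgaussianMGF_of_le (.sum_of_iIndepFun hindep fun i _ =>
    (hasSubgaussianMGF_eval_pi_rademacher i).const_mul (a i)) ?_
  rw [← NNReal.coe_le_coe, NNReal.coe_sum]
  refine hc.trans_eq' (Finset.sum_congr rfl fun i _ => ?_)
  change a i * a i = a i ^ 2 * 1
  ring

theorem exists_sign_dotProduct_lt {κ : Type*} [Fintype κ] {a : κ → d → ℝ} {c : κ → ℝ≥0}
    (hac : ∀ k, a k ⬝ᵥ a k ≤ c k) {t : κ → ℝ} (ht : ∀ k, 0 ≤ t k)
    (hsum : ∑ k, Real.exp (-t k ^ 2 / (2 * c k)) < 1) :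
    ∃ e : d → ℝ, (∀ i, e i = 1 ∨ e i = -1) ∧ ∀ k, a k ⬝ᵥ e < t k := by
  set μ : Measure (d → ℝ) := Measure.pi fun _ => rademacher
  have hsign : ∀ᵐ e ∂μ, ∀ i, e i = 1 ∨ e i = -1 :=
    ae_all_iff.2 fun i => (measurePreserving_eval (fun _ => rademacher) i).quasiMeasurePreserving.ae
      ae_rademacher_eq_one_or_neg_one
  have hbad : μ.real (⋃ k, {e | t k ≤ a k ⬝ᵥ e}) < 1 :=
    (measureReal_iUnion_fintype_le _).trans_lt <| hsum.trans_le' <|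
      Finset.sum_le_sum fun k _ => (hasSubgaussianMGF_dotProduct (hac k)).measure_ge_le (ht k)
  by_contra! H
  refine hbad.not_ge ?_
  have hae : (⋃ k, {e | t k ≤ a k ⬝ᵥ e}) =ᵐ[μ] univ :=
    Filter.eventuallyEq_univ.2 <| hsign.mono fun e he => mem_iUnion.2 (H e he)
  rw [measureReal_congr hae, probReal_univ]

/-- The constant `6` makes the left-hand side equal to `N⁻²`, so that the failure probabilities of
two families of tail bounds add up to less than one. -/
theorem natCast_mul_exp_neg_sq_sqrt_log_le {N : ℕ} (hN : 2 ≤ N) {c : ℝ} (hc : 0 < c) :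
    N * Real.exp (-√(6 * c * Real.log N) ^ 2 / (2 * c)) ≤ 1 / 4 := by
  have hN0 : (2 : ℝ) ≤ N := by exact_mod_cast hN
  have hexp : -√(6 * c * Real.log N) ^ 2 / (2 * c) = -(3 : ℕ) * Real.log N := by
    rw [Real.sq_sqrt (by positivity)]
    push_cast
    field_simp
    ring
  rw [hexp, neg_mul, ← Real.log_pow, Real.exp_neg, Real.exp_log (by positivity)]
  calc (N : ℝ) * ((N : ℝ) ^ 3)⁻¹ = 1 / (N : ℝ) ^ 2 := by field_simp
    _ ≤ 1 / 2 ^ 2 := by gcongr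
    _ = 1 / 4 := by norm_num

theorem exists_sign_dotProduct_lt_sqrt_log {ι κ : Type*} [Fintype ι] [Fintype κ]
    (hι : 2 ≤ Fintype.card ι) (hκ : 2 ≤ Fintype.card κ) {a : ι → d → ℝ} {b : κ → d → ℝ}
    {r s : ℝ≥0} (hr : 0 < r) (hs : 0 < s)
    (ha : ∀ i, a i ⬝ᵥ a i ≤ r) (hb : ∀ k, b k ⬝ᵥ b k ≤ s) :
    ∃ e : d → ℝ, (∀ i, e i = 1 ∨ e i = -1) ∧
      (∀ i, a i ⬝ᵥ e < √(6 * r * Real.log (Fintype.card ι))) ∧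
      ∀ k, b k ⬝ᵥ e < √(6 * s * Real.log (Fintype.card κ)) := by
  let c : ι ⊕ κ → ℝ≥0 := Sum.elim (fun _ => r) fun _ => s
  let t : ι ⊕ κ → ℝ := Sum.elim (fun _ => √(6 * r * Real.log (Fintype.card ι)))
    fun _ => √(6 * s * Real.log (Fintype.card κ))
  have ht : ∀ k, 0 ≤ t k := Sum.rec (fun _ => Real.sqrt_nonneg _) fun _ => Real.sqrt_nonneg _
  have hsum : ∑ k, Real.exp (-t k ^ 2 / (2 * c k)) < 1 := by
    simp only [c, t, Fintype.sum_sum_type, Sum.elim_inl, Sum.elim_inr, Finset.sum_const,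
      Finset.card_univ, nsmul_eq_mul]
    exact (add_le_add (natCast_mul_exp_neg_sq_sqrt_log_le hι hr)
      (natCast_mul_exp_neg_sq_sqrt_log_le hκ hs)).trans_lt (by norm_num)
  obtain ⟨e, he, hlt⟩ := exists_sign_dotProduct_lt (a := Sum.elim a b) (c := c)
    (Sum.rec ha hb) ht hsum
  exact ⟨e, he, fun i => hlt (.inl i), fun k => hlt (.inr k)⟩

end RademacherSums

section MomentMatrix

/-- The second moment matrix of a family of vectors `v` with weights `p`, whose determinant is
maximised over the weights (a D-optimal design). -/
def momentMatrix {ι d : Type*} [Fintype ι] (v : ι → d → ℝ) (p : ι → ℝ) : Matrix d d ℝ :=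
  ∑ i, p i • Matrix.vecMulVec (v i) (v i)

variable {ι d : Type*} [Fintype ι] {v : ι → d → ℝ} {p : ι → ℝ}

theorem isHermitian_momentMatrix (v : ι → d → ℝ) (p : ι → ℝ) : (momentMatrix v p).IsHermitian := by
  ext a b
  simp [momentMatrix, Matrix.sum_apply, Matrix.vecMulVec_apply, mul_comm]

@[fun_prop]
theorem continuous_momentMatrix (v : ι → d → ℝ) : Continuous (momentMatrix v) := by
  unfold momentMatrix
  fun_prop

theorem momentMatrix_smul (v : ι → d → ℝ) (s : ℝ) (p : ι → ℝ) :
    momentMatrix v (s • p) = s • momentMatrix v p := by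
  simp [momentMatrix, Finset.smul_sum, mul_smul]

theorem momentMatrix_add_single [DecidableEq ι] (v : ι → d → ℝ) (p : ι → ℝ) (i : ι) (s : ℝ) :
    momentMatrix v (p + Pi.single i s) = momentMatrix v p + s • Matrix.vecMulVec (v i) (v i) := by
  simp [momentMatrix, add_smul, Finset.sum_add_distrib, Pi.single_apply, ite_smul]

variable [Fintype d]

theorem dotProduct_momentMatrix_mulVec (v : ι → d → ℝ) (p : ι → ℝ) (x : d → ℝ) :
    x ⬝ᵥ momentMatrix v p *ᵥ x = ∑ i, p i * (v i ⬝ᵥ x) ^ 2 := by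
  simp only [momentMatrix, Matrix.sum_mulVec, Matrix.smul_mulVec, Matrix.vecMulVec_mulVec,
    op_smul_eq_smul, dotProduct_comm x, sum_dotProduct, smul_dotProduct, smul_eq_mul, sq]

theorem posSemidef_momentMatrix {d : Type*} [Finite d] (v : ι → d → ℝ) (hp : ∀ i, 0 ≤ p i) :
    (momentMatrix v p).PosSemidef := by
  have := Fintype.ofFinite d
  refine .of_dotProduct_mulVec_nonneg (isHermitian_momentMatrix v p) fun x => ?_
  rw [star_trivial, dotProduct_momentMatrix_mulVec]
  exact Finset.sum_nonneg fun i _ => mul_nonneg (hp i) (sq_nonneg _)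

theorem posDef_momentMatrix (hv : ∀ x, (∀ i, v i ⬝ᵥ x = 0) → x = 0) (hp : ∀ i, 0 < p i) :
    (momentMatrix v p).PosDef := by
  refine .of_dotProduct_mulVec_pos (isHermitian_momentMatrix v p) fun x hx => ?_
  rw [star_trivial, dotProduct_momentMatrix_mulVec]
  obtain ⟨i, hi⟩ : ∃ i, v i ⬝ᵥ x ≠ 0 := by
    contrapose! hx
    exact hv x hx
  exact Finset.sum_pos' (fun j _ => mul_nonneg (hp j).le (sq_nonneg _))
    ⟨i, Finset.mem_univ i, mul_pos (hp i) (by positivity)⟩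

theorem det_add_smul_vecMulVec {R d : Type*} [CommRing R] [Fintype d] [DecidableEq d]
    {M : Matrix d d R} (hM : IsUnit M.det) (s : R) (x y : d → R) :
    (M + s • Matrix.vecMulVec x y).det = M.det * (1 + s * (y ⬝ᵥ M⁻¹ *ᵥ x)) := by
  rw [← Matrix.smul_vecMulVec, Matrix.vecMulVec_eq Unit,
    Matrix.det_add_replicateCol_mul_replicateRow hM, Matrix.det_unique (n := Unit),
    Matrix.mul_assoc, Matrix.add_apply, Matrix.one_apply_eq, ← Matrix.replicateCol_mulVec,
    Matrix.replicateRow_mul_replicateCol_apply, Matrix.mulVec_smul, dotProduct_smul, smul_eq_mul]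

theorem le_natCast_of_one_add_mul_le_pow {n : ℕ} {q : ℝ}
    (h : ∀ s : ℝ, 0 < s → 1 + s * q ≤ (1 + s) ^ n) : q ≤ n := by
  have hderiv : HasDerivAt (fun s : ℝ => (1 + s) ^ n) n 0 := by
    simpa using ((hasDerivAt_id (0 : ℝ)).const_add 1).fun_pow n
  refine ge_of_tendsto hderiv.tendsto_slope_zero_right ?_
  filter_upwards [self_mem_nhdsWithin] with s (hs : 0 < s)
  rw [zero_add, add_zero, one_pow, smul_eq_mul, inv_mul_eq_div, le_div_iff₀ hs]
  linarith [h s hs]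

theorem exists_isMaxOn_det_momentMatrix [DecidableEq d] [Nonempty ι]
    (hv : ∀ x, (∀ i, v i ⬝ᵥ x = 0) → x = 0) :
    ∃ p ∈ stdSimplex ℝ ι, 0 < (momentMatrix v p).det ∧
      IsMaxOn (fun q => (momentMatrix v q).det) (stdSimplex ℝ ι) p := by
  have hcard : (0 : ℝ) < Fintype.card ι := by exact_mod_cast Fintype.card_pos
  have huniform : (fun _ => (Fintype.card ι : ℝ)⁻¹) ∈ stdSimplex ℝ ι :=
    ⟨fun _ => by positivity, by simp [hcard.ne']⟩
  obtain ⟨p, hp, hmax⟩ := (isCompact_stdSimplex ℝ ι).exists_isMaxOn ⟨_, huniform⟩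
    (continuous_momentMatrix v).matrix_det.continuousOn
  exact ⟨p, hp, (posDef_momentMatrix hv fun _ => by positivity).det_pos.trans_le (hmax huniform),
    hmax⟩

/-- The Kiefer–Wolfowitz argument: compare `p` with the renormalised weights
`(1 + s)⁻¹ • (p + Pi.single i s)` and let `s → 0`. -/
theorem dotProduct_inv_momentMatrix_mulVec_le [DecidableEq d] (hp : p ∈ stdSimplex ℝ ι)
    (hdet : 0 < (momentMatrix v p).det)
    (hmax : IsMaxOn (fun q => (momentMatrix v q).det) (stdSimplex ℝ ι) p) (i : ι) :
    v i ⬝ᵥ (momentMatrix v p)⁻¹ *ᵥ v i ≤ Fintype.card d := by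
  classical
  refine le_natCast_of_one_add_mul_le_pow fun s hs => ?_
  have hs1 : (1 + s) ≠ 0 := by positivity
  have hmem : (1 + s)⁻¹ • (p + Pi.single i s) ∈ stdSimplex ℝ ι := by
    have hsingle : 0 ≤ (Pi.single i s : ι → ℝ) := Pi.single_nonneg.2 hs.le
    refine ⟨fun j => mul_nonneg (by positivity) (add_nonneg (hp.1 j) (hsingle j)), ?_⟩
    simp [← Finset.mul_sum, Finset.sum_add_distrib, hp.2, hs1]
  have hle : (1 + s)⁻¹ ^ Fintype.card d * (momentMatrix v (p + Pi.single i s)).det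
      ≤ (momentMatrix v p).det := by
    rw [← Matrix.det_smul, ← momentMatrix_smul]
    exact hmax hmem
  rw [momentMatrix_add_single, det_add_smul_vecMulVec hdet.ne'.isUnit, inv_pow,
    inv_mul_le_iff₀ (by positivity), mul_comm _ (momentMatrix v p).det] at hle
  exact le_of_mul_le_mul_left hle hdet

open scoped MatrixOrder in
theorem exists_eq_transpose_mul_self {M : Matrix d d ℝ} (hM : M.PosSemidef) :
    ∃ B : Matrix d d ℝ, M = Bᵀ * B := by
  classical
  simpa [Matrix.star_eq_conjTranspose] using CStarAlgebra.nonneg_iff_eq_star_mul_self.1 hM.nonneg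

theorem exists_dotProduct_eq_card_and_le {κ : Type*} [Fintype κ] [Nonempty d]
    (hι : 2 ≤ Fintype.card ι) (hκ : 2 ≤ Fintype.card κ) {w : κ → d → ℝ}
    (hv : ∀ x, (∀ i, v i ⬝ᵥ x = 0) → x = 0) (hvw : ∀ i k, |v i ⬝ᵥ w k| ≤ 1) :
    ∃ x y : d → ℝ, x ⬝ᵥ y = Fintype.card d ∧
      (∀ k, w k ⬝ᵥ x ≤ √(6 * Real.log (Fintype.card κ))) ∧
      ∀ i, v i ⬝ᵥ y ≤ √(6 * Fintype.card d * Real.log (Fintype.card ι)) := by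
  classical
  have : Nonempty ι := Fintype.card_pos_iff.1 (by lia)
  obtain ⟨p, hp, hdet, hmax⟩ := exists_isMaxOn_det_momentMatrix hv
  obtain ⟨B, hB⟩ := exists_eq_transpose_mul_self (posSemidef_momentMatrix v hp.1)
  have hBdet : IsUnit B.det := by
    rw [hB, Matrix.det_mul] at hdet
    exact (right_ne_zero_of_mul hdet.ne').isUnit
  have hadj (A : Matrix d d ℝ) (x y : d → ℝ) : x ⬝ᵥ A *ᵥ y = (Aᵀ *ᵥ x) ⬝ᵥ y := by
    rw [Matrix.dotProduct_mulVec, Matrix.mulVec_transpose]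
  have hw (k : κ) : (B *ᵥ w k) ⬝ᵥ (B *ᵥ w k) ≤ (1 : ℝ≥0) := by
    rw [← Matrix.transpose_transpose B, ← hadj, Matrix.transpose_transpose, Matrix.mulVec_mulVec,
      ← hB, dotProduct_momentMatrix_mulVec, NNReal.coe_one, ← hp.2]
    exact Finset.sum_le_sum fun i _ =>
      mul_le_of_le_one_right (hp.1 i) ((sq_le_one_iff_abs_le_one _).2 (hvw i k))
  have hv' (i : ι) : (B⁻¹ᵀ *ᵥ v i) ⬝ᵥ (B⁻¹ᵀ *ᵥ v i) ≤ (Fintype.card d : ℝ≥0) := by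
    have := dotProduct_inv_momentMatrix_mulVec_le hp hdet hmax i
    rwa [hB, Matrix.mul_inv_rev, ← Matrix.mulVec_mulVec, hadj, ← Matrix.transpose_nonsing_inv]
      at this
  obtain ⟨e, he, hew, hev⟩ := exists_sign_dotProduct_lt_sqrt_log hκ hι one_pos
    (Nat.cast_pos.2 Fintype.card_pos) hw hv'
  refine ⟨Bᵀ *ᵥ e, B⁻¹ *ᵥ e, ?_, fun k => ?_, fun i => ?_⟩
  · have hee : e ⬝ᵥ e = Fintype.card d := by
      simp [dotProduct, fun i => mul_self_eq_one_iff.2 (he i)]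
    rw [← hadj, Matrix.mulVec_mulVec, Matrix.mul_nonsing_inv _ hBdet, Matrix.one_mulVec, hee]
  · rw [hadj, Matrix.transpose_transpose]
    simpa using (hew k).le
  · rw [hadj]
    simpa using (hev i).le

end MomentMatrix

section Duality

variable {E : Type*} [AddCommGroup E] [Module ℝ E] [FiniteDimensional ℝ E] [Nontrivial E]

theorem exists_dual_apply_eq_finrank_and_le {ι κ : Type*} [Fintype ι] [Fintype κ]
    (hι : 2 ≤ Fintype.card ι) (hκ : 2 ≤ Fintype.card κ) {v : ι → E} {w : κ → Module.Dual ℝ E}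
    (hv : Submodule.span ℝ (range v) = ⊤) (hvw : ∀ i k, |w k (v i)| ≤ 1) :
    ∃ (x : E) (f : Module.Dual ℝ E), f x = Module.finrank ℝ E ∧
      (∀ k, w k x ≤ √(6 * Real.log (Fintype.card κ))) ∧
      ∀ i, f (v i) ≤ √(6 * Module.finrank ℝ E * Real.log (Fintype.card ι)) := by
  let b := Module.finBasis ℝ E
  have : Nonempty (Fin (Module.finrank ℝ E)) := Fin.pos_iff_nonempty.1 Module.finrank_pos
  have hconstr (y : Fin (Module.finrank ℝ E) → ℝ) (x : E) :
      b.constr ℝ y x = b.equivFun x ⬝ᵥ y := by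
    simp [b.constr_apply_fintype ℝ, dotProduct]
  have hdual (g : Module.Dual ℝ E) (x : E) : g x = b.equivFun x ⬝ᵥ fun j => g (b j) := by
    rw [← hconstr, b.constr_self ℝ]
  have hv' (y : Fin (Module.finrank ℝ E) → ℝ) (hy : ∀ i, b.equivFun (v i) ⬝ᵥ y = 0) : y = 0 := by
    have hzero : b.constr ℝ y = 0 := LinearMap.ext_on_range hv fun i => (hconstr y _).trans (hy i)
    funext j
    rw [← b.constr_basis ℝ y j, hzero, LinearMap.zero_apply, Pi.zero_apply]
  obtain ⟨x, y, hxy, hx, hy⟩ := exists_dotProduct_eq_card_and_le hι hκ hv'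
    (w := fun k j => w k (b j)) fun i k => by rw [← hdual]; exact hvw i k
  rw [Fintype.card_fin] at hxy hy
  refine ⟨b.equivFun.symm x, b.constr ℝ y, ?_, fun k => ?_, fun i => ?_⟩
  · rw [hconstr, LinearEquiv.apply_symm_apply, hxy]
  · rw [hdual, LinearEquiv.apply_symm_apply, dotProduct_comm]
    exact hx k
  · rw [hconstr]
    exact hy i

end Duality

section ExtremeSubsets

variable {𝕜 E : Type*} [Field 𝕜] [LinearOrder 𝕜] [IsStrictOrderedRing 𝕜] [AddCommGroup E]
  [Module 𝕜 E] {V F : Set E}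

theorem convexHull_inter_eq_of_isExtreme (hF : Convex 𝕜 F) (h : IsExtreme 𝕜 (convexHull 𝕜 V) F) :
    convexHull 𝕜 (V ∩ F) = F := by
  refine (convexHull_min inter_subset_right hF).antisymm fun x hx => ?_
  have hdiff : convexHull 𝕜 (V \ F) ⊆ convexHull 𝕜 V \ F :=
    convexHull_min (sdiff_subset_sdiff_left (subset_convexHull 𝕜 V))
      (h.convex_sdiff (convex_convexHull 𝕜 V))
  have hx' : x ∈ convexHull 𝕜 (V ∩ F ∪ V \ F) := by
    rw [inter_union_sdiff]
    exact h.subset hx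
  rcases (V ∩ F).eq_empty_or_nonempty with hin | hin
  · rw [hin, empty_union] at hx'
    exact absurd hx (hdiff hx').2
  rcases (V \ F).eq_empty_or_nonempty with hout | hout
  · rwa [hout, union_empty] at hx'
  rw [convexHull_union hin hout, mem_convexJoin] at hx'
  obtain ⟨y, hy, z, hz, hxyz⟩ := hx'
  rw [← insert_endpoints_openSegment] at hxyz
  rcases hxyz with rfl | rfl | hxyz
  · exact hy
  · exact absurd hx (hdiff hz).2
  · exact absurd (h.right_mem_of_mem_openSegment (convexHull_mono inter_subset_left hy)
      (hdiff hz).1 hx hxyz) (hdiff hz).2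

theorem finite_setOf_convex_isExtreme_convexHull (hV : V.Finite) :
    {F | Convex 𝕜 F ∧ IsExtreme 𝕜 (convexHull 𝕜 V) F}.Finite := by
  refine .of_finite_image (f := (V ∩ ·)) (hV.finite_subsets.subset ?_) fun F hF G hG hFG => ?_
  · rintro _ ⟨F, -, rfl⟩
    exact inter_subset_left
  · rw [← convexHull_inter_eq_of_isExtreme hF.1 hF.2, ← convexHull_inter_eq_of_isExtreme hG.1 hG.2]
    exact congrArg _ hFG

end ExtremeSubsets

section Polar

variable {E : Type*} [AddCommGroup E] [Module ℝ E] [TopologicalSpace E] {V P : Set E}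
  {f g : StrongDual ℝ E}

theorem convex_polar (V : Set E) : Convex ℝ (StrongDual.polar ℝ V) :=
  (LinearMap.polar_AbsConvex V).2

theorem neg_polar (V : Set E) : -StrongDual.polar ℝ V = StrongDual.polar ℝ V :=
  (LinearMap.polar_AbsConvex V).1.neg_eq

theorem polar_convexHull (V : Set E) :
    StrongDual.polar ℝ (convexHull ℝ V) = StrongDual.polar ℝ V := by
  let B := (topDualPairing ℝ E).flip
  refine (B.polar_antitone (subset_convexHull ℝ V)).antisymm fun f hf x hx => ?_
  exact convexHull_min (B.subset_bipolar V) (LinearMap.polar_AbsConvex _).2 hx f hf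

theorem mem_polar_iff_forall_le_one (hP : P = -P) :
    f ∈ StrongDual.polar ℝ P ↔ ∀ x ∈ P, f x ≤ 1 := by
  refine ⟨fun hf x hx => (Real.le_norm_self _).trans (hf x hx), fun hf x hx => ?_⟩
  rw [hP] at hx
  exact abs_le'.2 ⟨hf x (hP ▸ hx), by simpa using hf (-x) hx⟩

theorem eventually_add_smul_mem_polar (hV : V.Finite) (hf : f ∈ StrongDual.polar ℝ V)
    (hg : ∀ v ∈ V, ‖f v‖ = 1 → g v = 0) : ∀ᶠ t : ℝ in 𝓝 0, f + t • g ∈ StrongDual.polar ℝ V := by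
  refine (Filter.eventually_all_finite hV).2 fun v hv => ?_
  change ∀ᶠ t in 𝓝 0, ‖f v + t * g v‖ ≤ 1
  rcases (hf v hv).lt_or_eq with hlt | heq
  · have hcont : Continuous fun t : ℝ => ‖f v + t * g v‖ := by fun_prop
    exact (hcont.tendsto' 0 ‖f v‖ (by simp)).eventually_le_const hlt
  · simp [hg v hv heq, show ‖f v‖ = 1 from heq]

/-- Otherwise `f` could be moved both ways along `g` inside the polar. -/
theorem eq_zero_of_mem_extremePoints_polar (hV : V.Finite)
    (hf : f ∈ (StrongDual.polar ℝ V).extremePoints ℝ) (hg : ∀ v ∈ V, ‖f v‖ = 1 → g v = 0) :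
    g = 0 := by
  have hadd := eventually_add_smul_mem_polar hV hf.1 hg
  have hsub := (continuous_neg.tendsto' (0 : ℝ) 0 neg_zero).eventually hadd
  obtain ⟨t, ⟨hadd, hsub⟩, ht⟩ :=
    (((hadd.and hsub).filter_mono nhdsWithin_le_nhds).and (self_mem_nhdsWithin (s := {0}ᶜ))).exists
  have heq := hf.2 hadd hsub ⟨1 / 2, 1 / 2, by norm_num, by norm_num, by norm_num, by module⟩
  exact (smul_eq_zero.1 (add_eq_left.1 heq)).resolve_left ht

theorem mem_toExposed_iff_apply_eq_one (hP : P = -P) (hf : f ∈ StrongDual.polar ℝ P)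
    (hone : ∃ x ∈ P, f x = 1) {x : E} : x ∈ f.toExposed P ↔ x ∈ P ∧ f x = 1 := by
  have hle := (mem_polar_iff_forall_le_one hP).1 hf
  obtain ⟨x₀, hx₀, hfx₀⟩ := hone
  refine and_congr_right fun hx => ⟨fun h => ?_, fun h y hy => h ▸ hle y hy⟩
  exact (hle x hx).antisymm (hfx₀ ▸ h x₀ hx₀)

end Polar

section Facets

/-- The facets of a full-dimensional convex set `P` in a finite-dimensional space, as its nonempty
convex extreme subsets of codimension one. Avoiding the truncated subtraction `finrank - 1` leaves
convex sets in a zero-dimensional space without facets. -/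
def facets {E : Type*} [AddCommGroup E] [Module ℝ E] (P : Set E) : Set (Set E) :=
  {F | F.Nonempty ∧ Convex ℝ F ∧ IsExtreme ℝ P F ∧
    Module.finrank ℝ (vectorSpan ℝ F) + 1 = Module.finrank ℝ E}

theorem setOf_isFaceOfDim_eq_facets {n : ℕ} (hn : 0 < n) (P : Set (EuclideanSpace ℝ (Fin n))) :
    {F | IsFaceOfDim P F (n - 1)} = facets P := by
  ext F
  simp only [facets, IsFaceOfDim, mem_ofPred_eq, finrank_euclideanSpace_fin,
    eq_tsub_iff_add_eq_of_le (Nat.one_le_of_lt hn)]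

variable {E : Type*} [NormedAddCommGroup E] [NormedSpace ℝ E] {V : Set E} {f : StrongDual ℝ E}

theorem eq_zero_of_forall_convexHull_apply_eq_one (hV : V.Finite)
    (hsymm : convexHull ℝ V = -convexHull ℝ V)
    (hf : f ∈ (StrongDual.polar ℝ (convexHull ℝ V)).extremePoints ℝ) {g : StrongDual ℝ E}
    (hg : ∀ x ∈ convexHull ℝ V, f x = 1 → g x = 0) : g = 0 := by
  rw [polar_convexHull] at hf
  refine eq_zero_of_mem_extremePoints_polar hV hf fun v hv hfv => ?_
  have hvP := subset_convexHull ℝ V hv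
  rcases eq_or_eq_neg_of_abs_eq hfv with hfv | hfv
  · exact hg v hvP hfv
  · rw [hsymm] at hvP
    simpa using hg (-v) hvP (by simp [hfv])

theorem exists_mem_convexHull_apply_eq_one [Nontrivial E] (hV : V.Finite)
    (hsymm : convexHull ℝ V = -convexHull ℝ V)
    (hf : f ∈ (StrongDual.polar ℝ (convexHull ℝ V)).extremePoints ℝ) :
    ∃ x ∈ convexHull ℝ V, f x = 1 := by
  by_contra! hne
  obtain ⟨g, hg⟩ := exists_ne (0 : StrongDual ℝ E)
  exact hg (eq_zero_of_forall_convexHull_apply_eq_one hV hsymm hf fun x hx hfx =>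
    absurd hfx (hne x hx))

theorem injOn_toExposed_extremePoints_polar [Nontrivial E] (hV : V.Finite)
    (hsymm : convexHull ℝ V = -convexHull ℝ V) :
    InjOn (fun f : StrongDual ℝ E => f.toExposed (convexHull ℝ V))
      ((StrongDual.polar ℝ (convexHull ℝ V)).extremePoints ℝ) := by
  intro f hf g hg (hfg : f.toExposed _ = g.toExposed _)
  have hmem {f : StrongDual ℝ E} (hf : f ∈ (StrongDual.polar ℝ (convexHull ℝ V)).extremePoints ℝ)
      {x : E} : x ∈ f.toExposed (convexHull ℝ V) ↔ x ∈ convexHull ℝ V ∧ f x = 1 :=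
    mem_toExposed_iff_apply_eq_one hsymm hf.1 (exists_mem_convexHull_apply_eq_one hV hsymm hf)
  refine sub_eq_zero.1 <| eq_zero_of_forall_convexHull_apply_eq_one hV hsymm hf fun x hx hfx => ?_
  have hgx := ((hmem hg).1 (hfg ▸ (hmem hf).2 ⟨hx, hfx⟩)).2
  rw [sub_apply, hfx, hgx, sub_self]

variable [FiniteDimensional ℝ E] [Nontrivial E]

theorem vectorSpan_toExposed_eq_ker (hV : V.Finite) (hsymm : convexHull ℝ V = -convexHull ℝ V)
    (hf : f ∈ (StrongDual.polar ℝ (convexHull ℝ V)).extremePoints ℝ) :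
    vectorSpan ℝ (f.toExposed (convexHull ℝ V)) = f.ker := by
  have hone := exists_mem_convexHull_apply_eq_one hV hsymm hf
  have hmem {x : E} := mem_toExposed_iff_apply_eq_one hsymm hf.1 hone (x := x)
  obtain ⟨x₀, hx₀, hfx₀⟩ := hone
  refine le_antisymm ?_ fun z hz => ?_
  · refine Submodule.span_le.2 ?_
    rintro _ ⟨x, hx, y, hy, rfl⟩
    simp [(hmem.1 hx).2, (hmem.1 hy).2]
  · by_contra hzspan
    obtain ⟨g, hgz, hg⟩ := Submodule.exists_le_ker_of_notMem hzspan
    have hzero : g.toContinuousLinearMap - g x₀ • f = 0 := by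
      refine eq_zero_of_forall_convexHull_apply_eq_one hV hsymm hf fun x hx hfx => ?_
      have := hg (vsub_mem_vectorSpan ℝ (hmem.2 ⟨hx, hfx⟩) (hmem.2 ⟨hx₀, hfx₀⟩))
      simpa [hfx] using this
    have hfz : f z = 0 := hz
    exact hgz (by simpa [hfz] using congr($hzero z))

theorem toExposed_mem_facets (hV : V.Finite) (hsymm : convexHull ℝ V = -convexHull ℝ V)
    (hf : f ∈ (StrongDual.polar ℝ (convexHull ℝ V)).extremePoints ℝ) :
    f.toExposed (convexHull ℝ V) ∈ facets (convexHull ℝ V) := by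
  have hone := exists_mem_convexHull_apply_eq_one hV hsymm hf
  have hexposed : IsExposed ℝ (convexHull ℝ V) (f.toExposed (convexHull ℝ V)) :=
    ContinuousLinearMap.toExposed.isExposed
  refine ⟨?_, hexposed.convex (convex_convexHull ℝ V), hexposed.isExtreme, ?_⟩
  · exact hone.imp fun x => (mem_toExposed_iff_apply_eq_one hsymm hf.1 hone).2
  · rw [vectorSpan_toExposed_eq_ker hV hsymm hf]
    refine Module.Dual.finrank_ker_add_one_of_ne_zero fun hzero => ?_
    obtain ⟨x, -, hx⟩ := hone
    simpa [hx] using congr($hzero x)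

theorem finite_facets_convexHull {E : Type*} [AddCommGroup E] [Module ℝ E] {V : Set E}
    (hV : V.Finite) : (facets (convexHull ℝ V)).Finite :=
  (finite_setOf_convex_isExtreme_convexHull hV).subset fun _ hF => ⟨hF.2.1, hF.2.2.1⟩

theorem finite_extremePoints_polar (hV : V.Finite) (hsymm : convexHull ℝ V = -convexHull ℝ V) :
    ((StrongDual.polar ℝ (convexHull ℝ V)).extremePoints ℝ).Finite :=
  .of_injOn (fun _ hf => toExposed_mem_facets hV hsymm hf)
    (injOn_toExposed_extremePoints_polar hV hsymm) (finite_facets_convexHull hV)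

theorem ncard_extremePoints_polar_le (hV : V.Finite) (hsymm : convexHull ℝ V = -convexHull ℝ V) :
    ((StrongDual.polar ℝ (convexHull ℝ V)).extremePoints ℝ).ncard ≤
      (facets (convexHull ℝ V)).ncard :=
  ncard_le_ncard_of_injOn _ (fun _ hf => toExposed_mem_facets hV hsymm hf)
    (injOn_toExposed_extremePoints_polar hV hsymm) (finite_facets_convexHull hV)

end Facets

section SymmetricConvexBody

theorem zero_mem_interior_of_eq_neg {E : Type*} [AddCommGroup E] [Module ℝ E] [TopologicalSpace E]
    [IsTopologicalAddGroup E] [ContinuousConstSMul ℝ E] {K : Set E} (hK : Convex ℝ K)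
    (hsymm : K = -K) (hint : (interior K).Nonempty) : 0 ∈ interior K := by
  obtain ⟨x, hx⟩ := hint
  have hneg : -x ∈ interior K := by
    rw [hsymm]
    change -x ∈ interior (Homeomorph.neg E ⁻¹' K)
    rw [← (Homeomorph.neg E).preimage_interior]
    simpa using hx
  refine hK.interior.segment_subset hx hneg ?_
  exact ⟨1 / 2, 1 / 2, by norm_num, by norm_num, by norm_num, by module⟩

theorem neg_extremePoints {𝕜 E : Type*} [Ring 𝕜] [PartialOrder 𝕜] [IsOrderedRing 𝕜]
    [AddCommGroup E] [Module 𝕜 E] (K : Set E) :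
    -K.extremePoints 𝕜 = (-K).extremePoints 𝕜 := by
  rw [← image_neg_eq_neg, ← image_neg_eq_neg]
  exact image_extremePoints (LinearEquiv.neg 𝕜) K

variable {E : Type*} [NormedAddCommGroup E] [NormedSpace ℝ E] {K P : Set E}

theorem apply_le_of_forall_extremePoints_apply_le (hcpt : IsCompact K) (hconv : Convex ℝ K)
    {f : StrongDual ℝ E} {c : ℝ} (hf : ∀ x ∈ K.extremePoints ℝ, f x ≤ c) {x : E} (hx : x ∈ K) :
    f x ≤ c := by
  rw [← closure_convexHull_extremePoints hcpt hconv] at hx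
  exact closure_minimal (convexHull_min hf (convex_halfSpace_le f.isLinear c))
    (isClosed_le f.continuous continuous_const) hx

theorem two_le_ncard_extremePoints [Nontrivial E] (hcpt : IsCompact K) (hconv : Convex ℝ K)
    (hsymm : K = -K) (hint : (interior K).Nonempty) (hfin : (K.extremePoints ℝ).Finite) :
    2 ≤ (K.extremePoints ℝ).ncard := by
  have hzero := (disjoint_interior_extremePoints K).notMem_of_mem_left
    (zero_mem_interior_of_eq_neg hconv hsymm hint)
  obtain ⟨e, he⟩ := hcpt.extremePoints_nonempty (hint.mono interior_subset)
  have hneg : -e ∈ K.extremePoints ℝ := by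
    rwa [← mem_neg, neg_extremePoints, ← hsymm]
  refine (one_lt_ncard hfin).2 ⟨e, he, -e, hneg, fun h => hzero ?_⟩
  have htwo : (2 : ℝ) • e = 0 := by rwa [two_smul, ← eq_neg_iff_add_eq_zero]
  rwa [(smul_eq_zero.1 htwo).resolve_left two_ne_zero] at he

theorem span_extremePoints_eq_top [FiniteDimensional ℝ E] (hcpt : IsCompact K)
    (hconv : Convex ℝ K) (hint : (interior K).Nonempty) :
    Submodule.span ℝ (K.extremePoints ℝ) = ⊤ := by
  refine Submodule.eq_top_of_nonempty_interior' _ (hint.mono (interior_mono ?_))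
  exact (closure_convexHull_extremePoints hcpt hconv).superset.trans <|
    closure_minimal (convexHull_min Submodule.subset_span (Submodule.convex _))
      (Submodule.closed_of_finiteDimensional _)

theorem isCompact_polar [FiniteDimensional ℝ E] (h0 : P ∈ 𝓝 0) :
    IsCompact (StrongDual.polar ℝ P) :=
  Metric.isCompact_of_isClosed_isBounded (NormedSpace.isClosed_polar ℝ P)
    (NormedSpace.isBounded_polar_of_mem_nhds_zero ℝ h0)

theorem interior_polar_nonempty (hP : Bornology.IsBounded P) :
    (interior (StrongDual.polar ℝ P)).Nonempty := by
  obtain ⟨r, hr, hPr⟩ := hP.subset_closedBall_lt 0 0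
  refine ⟨0, mem_interior_iff_mem_nhds.2 ?_⟩
  refine Filter.mem_of_superset (Metric.closedBall_mem_nhds 0 (inv_pos.2 hr)) ?_
  exact (NormedSpace.closedBall_inv_subset_polar_closedBall ℝ).trans
    ((topDualPairing ℝ E).flip.polar_antitone hPr)

variable [FiniteDimensional ℝ E]

theorem apply_le_mul_of_forall_extremePoints_polar (hcpt : IsCompact P) (hconv : Convex ℝ P)
    (hsymm : P = -P) (h0 : P ∈ 𝓝 0) {f : StrongDual ℝ E} {x : E} {a b : ℝ} (ha : 0 < a)
    (hf : ∀ v ∈ P.extremePoints ℝ, f v ≤ a)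
    (hx : ∀ w ∈ (StrongDual.polar ℝ P).extremePoints ℝ, w x ≤ b) : f x ≤ a * b := by
  have hpolar : a⁻¹ • f ∈ StrongDual.polar ℝ P := by
    refine (mem_polar_iff_forall_le_one hsymm).2 fun v hv => ?_
    rw [smul_apply, smul_eq_mul, inv_mul_le_one₀ ha]
    exact apply_le_of_forall_extremePoints_apply_le hcpt hconv hf hv
  rw [← inv_mul_le_iff₀ ha]
  exact apply_le_of_forall_extremePoints_apply_le (isCompact_polar h0) (convex_polar P)
    (f := ContinuousLinearMap.apply ℝ ℝ x) hx hpolar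

theorem finrank_le_log_ncard_mul_log_ncard_polar [Nontrivial E] (hcpt : IsCompact P)
    (hconv : Convex ℝ P) (hsymm : P = -P) (hint : (interior P).Nonempty)
    (hV : (P.extremePoints ℝ).Finite) (hW : ((StrongDual.polar ℝ P).extremePoints ℝ).Finite) :
    (Module.finrank ℝ E : ℝ) ≤ 36 * (Real.log (P.extremePoints ℝ).ncard *
      Real.log ((StrongDual.polar ℝ P).extremePoints ℝ).ncard) := by
  have h0 := mem_interior_iff_mem_nhds.1 (zero_mem_interior_of_eq_neg hconv hsymm hint)
  have hV2 := two_le_ncard_extremePoints hcpt hconv hsymm hint hV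
  have hW2 := two_le_ncard_extremePoints (isCompact_polar h0) (convex_polar P) (neg_polar P).symm
    (interior_polar_nonempty hcpt.isBounded) hW
  have hspan := span_extremePoints_eq_top hcpt hconv hint
  have := hV.fintype
  have := hW.fintype
  rw [← Nat.card_coe_set_eq, Nat.card_eq_fintype_card] at hV2 hW2 ⊢
  rw [← Nat.card_coe_set_eq, Nat.card_eq_fintype_card]
  obtain ⟨x, f, hfx, hx, hf⟩ := exists_dual_apply_eq_finrank_and_le hV2 hW2
    (v := ((↑) : P.extremePoints ℝ → E))
    (w := fun w : (StrongDual.polar ℝ P).extremePoints ℝ => (w : StrongDual ℝ E).toLinearMap)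
    (by rwa [Subtype.range_coe]) fun v w => w.2.1 v v.2.1
  set n : ℝ := (Module.finrank ℝ E : ℝ)
  set L := Real.log (Fintype.card (P.extremePoints ℝ))
  set L' := Real.log (Fintype.card ((StrongDual.polar ℝ P).extremePoints ℝ))
  have hn : 0 < n := Nat.cast_pos.2 Module.finrank_pos
  have hL : 0 < L := Real.log_pos (by exact_mod_cast hV2)
  have hle : n ≤ √(6 * n * L) * √(6 * L') := hfx.ge.trans <|
    apply_le_mul_of_forall_extremePoints_polar hcpt hconv hsymm h0
      (f := LinearMap.toContinuousLinearMap f) (by positivity)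
      (fun v hv => hf ⟨v, hv⟩) fun w hw => hx ⟨w, hw⟩
  rw [← Real.sqrt_mul (by positivity), Real.le_sqrt' hn] at hle
  refine le_of_mul_le_mul_left ?_ hn
  linarith

end SymmetricConvexBody

section Polytope

variable {E : Type*} [NormedAddCommGroup E] [NormedSpace ℝ E] [FiniteDimensional ℝ E] [Nontrivial E]
  {V : Set E}

theorem flm_symmetric_general (hV : V.Finite) (hint : (interior (convexHull ℝ V)).Nonempty)
    (hsymm : convexHull ℝ V = -convexHull ℝ V) :
    Module.finrank ℝ E / 36 ≤ Real.log ((convexHull ℝ V).extremePoints ℝ).ncard *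
      Real.log (facets (convexHull ℝ V)).ncard := by
  have hW := finite_extremePoints_polar hV hsymm
  have hcpt := hV.isCompact_convexHull ℝ
  have h0 := mem_interior_iff_mem_nhds.1
    (zero_mem_interior_of_eq_neg (convex_convexHull ℝ V) hsymm hint)
  have hWpos := (ncard_pos hW).2
    ((isCompact_polar h0).extremePoints_nonempty (StrongDual.polar_nonempty ℝ _))
  rw [div_le_iff₀' (by norm_num)]
  calc (Module.finrank ℝ E : ℝ)
    _ ≤ 36 * (Real.log ((convexHull ℝ V).extremePoints ℝ).ncard *
          Real.log ((StrongDual.polar ℝ (convexHull ℝ V)).extremePoints ℝ).ncard) :=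
      finrank_le_log_ncard_mul_log_ncard_polar hcpt (convex_convexHull ℝ V) hsymm hint
        (hV.subset extremePoints_convexHull_subset) hW
    _ ≤ 36 * (Real.log ((convexHull ℝ V).extremePoints ℝ).ncard *
          Real.log (facets (convexHull ℝ V)).ncard) := by
      gcongr
      exact ncard_extremePoints_polar_le hV hsymm

end Polytope

/-- **Figiel–Lindenstrauss–Milman.** There is an absolute constant `c > 0` such that every
origin-symmetric convex polytope `P ⊆ ℝⁿ` with nonempty interior satisfies
`log |V| * log |𝓕| ≥ c * n`, where `V` is the set of vertices and `𝓕` the set of facets. -/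
theorem flm_symmetric :
    ∃ c : ℝ, 0 < c ∧
      ∀ (n : ℕ), 0 < n →
        ∀ S : Finset (EuclideanSpace ℝ (Fin n)),
          ∀ P : Set (EuclideanSpace ℝ (Fin n)), P = convexHull ℝ (S : Set (EuclideanSpace ℝ (Fin n))) →
            (interior P).Nonempty → P = -P →
              Real.log ((Set.extremePoints ℝ P).ncard) *
                  Real.log ({F : Set (EuclideanSpace ℝ (Fin n)) | IsFaceOfDim P F (n - 1)}.ncard)
                ≥ c * n := by
  refine ⟨1 / 36, by norm_num, ?_⟩
  rintro n hn S _ rfl hint hsymm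
  have : Nonempty (Fin n) := Fin.pos_iff_nonempty.1 hn
  rw [setOf_isFaceOfDim_eq_facets hn]
  simpa [div_eq_inv_mul] using flm_symmetric_general S.finite_toSet hint hsymm
end

section
/- There exists an absolute constant c > 0 such that for every positive integer n and every convex polytope P ⊂ ℝⁿ satisfying B_n ⊆ P ⊆ √n·B_n (where B_n is the Euclidean unit ball in ℝⁿ), one has log|V| · log|𝓕| ≥ c·n, where V is the set of vertices of P and 𝓕 is the set of facets of P. -/
open Set Metric

/-!
If a convex body `K` and its polar `K°` are bounded by `a` and `b` in a direction `x`, then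
`‖x‖ ^ 2 ≤ a * b` by the bipolar theorem. For `x` a random sum of signed orthonormal vectors,
`‖x‖ ^ 2 = n`, while Hoeffding's inequality and a union bound over the extreme points show that
`a ≤ 2 R √(log M)` and `b ≤ 2 r⁻¹ √(log N)` are simultaneously possible when `r B ⊆ K ⊆ R B` and
`K`, `K°` have `M`, `N` extreme points. Hence `n r / R ≤ 4 √(log M * log N)`. When `K` is a
polytope, an extreme point `y` of `K°` is determined by the constraints `⟪y, s⟫ = 1` tight at it, so
`y ↦ {p ∈ K | ⟪y, p⟫ = 1}` is an injection from the extreme points of `K°` to the facets of `K`.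
-/

section ConvexSets

section Polytope

variable {𝕜 E : Type*} [Field 𝕜] [LinearOrder 𝕜] [IsStrictOrderedRing 𝕜] [AddCommGroup E]
  [Module 𝕜 E]

theorem eq_convexHull_inter_of_isExtreme {S F : Set E} (hF : IsExtreme 𝕜 (convexHull 𝕜 S) F)
    (hFc : Convex 𝕜 F) : F = convexHull 𝕜 (S ∩ F) := by
  refine Subset.antisymm (fun x hx => ?_) (convexHull_min inter_subset_right hFc)
  -- The points of the polytope that satisfy the claim form a convex set, because an open segment
  -- meeting `F` has both ends in `F`.
  let C : Set E := {x ∈ convexHull 𝕜 S | x ∈ F → x ∈ convexHull 𝕜 (S ∩ F)}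
  have hSC : S ⊆ C := fun s hs =>
    ⟨subset_convexHull 𝕜 S hs, fun hsF => subset_convexHull 𝕜 _ ⟨hs, hsF⟩⟩
  have hC : Convex 𝕜 C := by
    refine convex_iff_openSegment_subset.2 fun x hx y hy z hz => ?_
    refine ⟨(convex_convexHull 𝕜 S).openSegment_subset hx.1 hy.1 hz, fun hzF => ?_⟩
    have hxF := hF.left_mem_of_mem_openSegment hx.1 hy.1 hzF hz
    have hyF := hF.right_mem_of_mem_openSegment hx.1 hy.1 hzF hz
    exact (convex_convexHull 𝕜 _).openSegment_subset (hx.2 hxF) (hy.2 hyF) hz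
  exact (convexHull_min hSC hC (hF.subset hx)).2 hx

theorem finite_setOf_convex_isExtreme_convexHull_s1 {S : Set E} (hS : S.Finite) :
    {F : Set E | Convex 𝕜 F ∧ IsExtreme 𝕜 (convexHull 𝕜 S) F}.Finite := by
  refine (hS.finite_subsets.image (convexHull 𝕜)).subset ?_
  rintro F ⟨hFc, hF⟩
  exact ⟨S ∩ F, inter_subset_left, (eq_convexHull_inter_of_isExtreme hF hFc).symm⟩

end Polytope

section AffineHyperplane

variable {𝕜 E : Type*} [Field 𝕜] [AddCommGroup E] [Module 𝕜 E] [FiniteDimensional 𝕜 E]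

theorem finrank_vectorSpan_add_one_of_span_eq_top {F : Set E} (hF : F.Nonempty)
    (hspan : Submodule.span 𝕜 F = ⊤) {f : Module.Dual 𝕜 E} (hf : ∀ p ∈ F, f p = 1) :
    Module.finrank 𝕜 (vectorSpan 𝕜 F) + 1 = Module.finrank 𝕜 E := by
  obtain ⟨p₀, hp₀⟩ := hF
  have hker : vectorSpan 𝕜 F ≤ f.ker := Submodule.span_le.2 <| by
    rintro _ ⟨p, hp, q, hq, rfl⟩
    simp [hf p hp, hf q hq]
  have hp₀ker : p₀ ∉ vectorSpan 𝕜 F := fun h => by simpa [hf p₀ hp₀] using hker h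
  have hp₀0 : p₀ ≠ 0 := fun h => hp₀ker (h ▸ Submodule.zero_mem _)
  have hcompl : IsCompl (vectorSpan 𝕜 F) (𝕜 ∙ p₀) := by
    refine ⟨(Submodule.disjoint_span_singleton' hp₀0).2 hp₀ker, ?_⟩
    rw [codisjoint_iff_le_sup, ← hspan, Submodule.span_le]
    intro p hp
    rw [← sub_add_cancel p p₀]
    exact Submodule.add_mem_sup (vsub_mem_vectorSpan 𝕜 hp hp₀)
      (Submodule.mem_span_singleton_self p₀)
  rw [← Submodule.finrank_add_eq_of_isCompl hcompl, finrank_span_singleton hp₀0]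

end AffineHyperplane

section KreinMilman

variable {E : Type*} [AddCommGroup E] [Module ℝ E] [TopologicalSpace E] [T2Space E]
  [IsTopologicalAddGroup E] [ContinuousSMul ℝ E] [LocallyConvexSpace ℝ E] {K : Set E}

theorem le_of_forall_mem_extremePoints_le (hK : IsCompact K) (hKc : Convex ℝ K)
    (f : StrongDual ℝ E) {t : ℝ} (h : ∀ v ∈ K.extremePoints ℝ, f v ≤ t) : ∀ v ∈ K, f v ≤ t := by
  have hclosed : IsClosed {v | f v ≤ t} := isClosed_le f.continuous continuous_const
  have hconvex : Convex ℝ {v | f v ≤ t} := convex_halfSpace_le f.isLinear t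
  rw [← closure_convexHull_extremePoints hK hKc]
  exact closure_minimal (convexHull_min h hconvex) hclosed

theorem one_lt_ncard_extremePoints (hK : IsCompact K) (hKc : Convex ℝ K)
    (hfin : (K.extremePoints ℝ).Finite) (hKn : K.Nontrivial) : 1 < (K.extremePoints ℝ).ncard := by
  refine one_lt_ncard_iff_nontrivial_and_finite.2 ⟨?_, hfin⟩
  by_contra h
  rw [not_nontrivial_iff] at h
  refine not_subsingleton_iff.2 hKn ?_
  rw [← closure_convexHull_extremePoints hK hKc]
  rcases h.eq_empty_or_singleton with h | ⟨v, h⟩ <;> simp [h]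

end KreinMilman

theorem nontrivial_closedBall {E : Type*} [NormedAddCommGroup E] [NormedSpace ℝ E] [Nontrivial E]
    {c : E} {r : ℝ} (hr : 0 < r) : (closedBall c r).Nontrivial := by
  obtain ⟨x, hx⟩ := exists_norm_eq E hr.le
  exact ⟨c + x, by simp [hx], c, by simp [hr.le], by simpa using norm_pos_iff.1 (hx ▸ hr)⟩

end ConvexSets

section Polar

variable {E : Type*} [NormedAddCommGroup E] [InnerProductSpace ℝ E] {P Q : Set E} {r : ℝ}

/-- The polar body `P° = {y | ⟪y, p⟫ ≤ 1 for all p ∈ P}`. The condition is one-sided, unlike that of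
`LinearMap.polar`, because `P` need not be symmetric. -/
def innerPolar (P : Set E) : Set E :=
  {y | ∀ p ∈ P, inner ℝ y p ≤ 1}

theorem innerPolar_anti (h : P ⊆ Q) : innerPolar Q ⊆ innerPolar P :=
  fun _ hy p hp => hy p (h hp)

theorem innerPolar_eq_iInter : innerPolar P = ⋂ p ∈ P, {y | innerSL ℝ p y ≤ 1} := by
  ext y
  simp [innerPolar, real_inner_comm]

theorem convex_innerPolar : Convex ℝ (innerPolar P) := by
  rw [innerPolar_eq_iInter]
  exact convex_iInter₂ fun p _ => convex_halfSpace_le (innerSL ℝ p).isLinear 1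

theorem isClosed_innerPolar : IsClosed (innerPolar P) := by
  rw [innerPolar_eq_iInter]
  exact isClosed_biInter fun p _ => isClosed_le (innerSL ℝ p).continuous continuous_const

theorem innerPolar_convexHull (S : Set E) : innerPolar (convexHull ℝ S) = innerPolar S := by
  refine Subset.antisymm (innerPolar_anti (subset_convexHull ℝ S)) fun y hy => ?_
  exact convexHull_min hy (convex_halfSpace_le (innerSL ℝ y).isLinear 1)

theorem innerPolar_closedBall (hr : 0 < r) :
    innerPolar (closedBall (0 : E) r) = closedBall 0 r⁻¹ := by
  ext y
  rw [mem_closedBall_zero_iff]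
  refine ⟨fun hy => ?_, fun hy p hp => ?_⟩
  · rcases eq_or_ne y 0 with rfl | hy0
    · simpa using hr.le
    have hy0' : 0 < ‖y‖ := norm_pos_iff.2 hy0
    have h := hy ((r / ‖y‖) • y) (by simp [norm_smul, hy0, abs_of_pos hr])
    rw [real_inner_smul_right, real_inner_self_eq_norm_sq] at h
    rw [le_inv_comm₀ hy0' hr, ← one_div, le_div_iff₀ hy0']
    calc r * ‖y‖ = r / ‖y‖ * ‖y‖ ^ 2 := by field_simp
      _ ≤ 1 := h
  · calc inner ℝ y p ≤ ‖y‖ * ‖p‖ := real_inner_le_norm y p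
      _ ≤ r⁻¹ * r := by gcongr; simpa using hp
      _ = 1 := inv_mul_cancel₀ hr.ne'

theorem innerPolar_subset_closedBall (hr : 0 < r) (hP : closedBall 0 r ⊆ P) :
    innerPolar P ⊆ closedBall 0 r⁻¹ :=
  innerPolar_closedBall (E := E) hr ▸ innerPolar_anti hP

theorem closedBall_subset_innerPolar (hr : 0 < r) (hP : P ⊆ closedBall 0 r) :
    closedBall 0 r⁻¹ ⊆ innerPolar P :=
  innerPolar_closedBall (E := E) hr ▸ innerPolar_anti hP

theorem isCompact_innerPolar [FiniteDimensional ℝ E] (hr : 0 < r) (hP : closedBall 0 r ⊆ P) :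
    IsCompact (innerPolar P) :=
  (isCompact_closedBall 0 r⁻¹).of_isClosed_subset isClosed_innerPolar
    (innerPolar_subset_closedBall hr hP)

theorem innerPolar_innerPolar [CompleteSpace E] (hPc : Convex ℝ P) (hPcl : IsClosed P)
    (hP0 : 0 ∈ P) : innerPolar (innerPolar P) = P := by
  refine Subset.antisymm (fun x hx => ?_) fun x hx y hy => real_inner_comm x y ▸ hy x hx
  by_contra hxP
  obtain ⟨f, u, hf, hu⟩ := geometric_hahn_banach_closed_point hPc hPcl hxP
  obtain ⟨w, rfl⟩ := (InnerProductSpace.toDual ℝ E).surjective f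
  simp only [InnerProductSpace.toDual_apply_apply] at hf hu
  have hu0 : 0 < u := by simpa using hf 0 hP0
  have hw : u⁻¹ • w ∈ innerPolar P := fun p hp => by
    rw [real_inner_smul_left, inv_mul_le_iff₀ hu0, mul_one]
    exact (hf p hp).le
  have hwx := hx _ hw
  rw [real_inner_smul_right, inv_mul_le_iff₀ hu0, mul_one, real_inner_comm] at hwx
  exact hwx.not_gt hu

theorem norm_sq_le_mul_of_forall_inner_le [CompleteSpace E] (hPc : Convex ℝ P) (hPcl : IsClosed P)
    (hP0 : 0 ∈ P) {x : E} {a b : ℝ} (hb : 0 < b) (hP : ∀ v ∈ P, inner ℝ v x ≤ a)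
    (hPolar : ∀ y ∈ innerPolar P, inner ℝ y x ≤ b) : ‖x‖ ^ 2 ≤ a * b := by
  have hx : b⁻¹ • x ∈ P := by
    rw [← innerPolar_innerPolar hPc hPcl hP0]
    intro y hy
    rw [real_inner_smul_left, inv_mul_le_iff₀ hb, mul_one, real_inner_comm]
    exact hPolar y hy
  have h := hP _ hx
  rwa [real_inner_smul_left, real_inner_self_eq_norm_sq, inv_mul_le_iff₀ hb, mul_comm] at h

/-- The face `{p ∈ P | ⟪y, p⟫ = 1}` of `P` dual to a point `y` of its polar body. -/
def dualFace (P : Set E) (y : E) : Set E :=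
  {p ∈ P | inner ℝ y p = 1}

theorem isExposed_dualFace {y : E} (hy : y ∈ innerPolar P) : IsExposed ℝ P (dualFace P y) := by
  rintro ⟨p₀, hp₀⟩
  refine ⟨innerSL ℝ y, Set.ext fun p => and_congr_right fun hp => ?_⟩
  simp only [innerSL_apply_apply]
  exact ⟨fun h q hq => h ▸ hy q hq, fun h => (hy p hp).antisymm (hp₀.2 ▸ h p₀ hp₀.1)⟩

section DualFacet

variable {S : Set E} {y : E}

theorem eventually_add_smul_mem_innerPolar (hS : S.Finite) (hy : y ∈ innerPolar S) {w : E}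
    (hw : ∀ s ∈ dualFace S y, inner ℝ w s = 0) :
    ∀ᶠ δ : ℝ in nhds 0, y + δ • w ∈ innerPolar S := by
  refine (Filter.eventually_all_finite hS).2 fun s hs => ?_
  rcases (hy s hs).lt_or_eq with hlt | heq
  · have hcont : Continuous fun δ : ℝ => inner ℝ (y + δ • w) s := by fun_prop
    have hlim := hcont.tendsto 0
    rw [zero_smul, add_zero] at hlim
    exact (hlim.eventually_lt_const hlt).mono fun _ h => h.le
  · refine Filter.Eventually.of_forall fun δ => ?_
    rw [inner_add_left, real_inner_smul_left, hw s ⟨hs, heq⟩, mul_zero, add_zero, heq]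

variable [FiniteDimensional ℝ E]

theorem span_dualFace_eq_top (hS : S.Finite) (hy : y ∈ (innerPolar S).extremePoints ℝ) :
    Submodule.span ℝ (dualFace S y) = ⊤ := by
  rw [← Submodule.orthogonal_eq_bot_iff, Submodule.eq_bot_iff]
  intro z hz
  have hzs : ∀ s ∈ dualFace S y, inner ℝ z s = 0 := fun s hs =>
    Submodule.inner_left_of_mem_orthogonal (Submodule.subset_span hs) hz
  have hplus := eventually_add_smul_mem_innerPolar hS hy.1 hzs
  have hminus := eventually_add_smul_mem_innerPolar (w := -z) hS hy.1 fun s hs => by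
    rw [inner_neg_left, hzs s hs, neg_zero]
  obtain ⟨δ, ⟨hδ₁, hδ₂⟩, hδ⟩ :=
    (((hplus.and hminus).filter_mono nhdsWithin_le_nhds).and
      (self_mem_nhdsWithin (s := Ioi (0 : ℝ)))).exists
  have hmid : y ∈ openSegment ℝ (y + δ • z) (y + δ • -z) :=
    ⟨1 / 2, 1 / 2, by norm_num, by norm_num, by norm_num, by module⟩
  have hδ0 : δ ≠ 0 := ne_of_gt hδ
  simpa [hδ0] using hy.2 hδ₁ hδ₂ hmid

theorem span_dualFace_convexHull_eq_top (hS : S.Finite)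
    (hy : y ∈ (innerPolar (convexHull ℝ S)).extremePoints ℝ) :
    Submodule.span ℝ (dualFace (convexHull ℝ S) y) = ⊤ := by
  rw [innerPolar_convexHull] at hy
  rw [eq_top_iff, ← span_dualFace_eq_top hS hy]
  exact Submodule.span_mono fun s hs => ⟨subset_convexHull ℝ S hs.1, hs.2⟩

theorem injOn_dualFace_extremePoints_innerPolar (hS : S.Finite) :
    InjOn (dualFace (convexHull ℝ S)) ((innerPolar (convexHull ℝ S)).extremePoints ℝ) := by
  intro y hy z _ hyz
  have hspan := span_dualFace_convexHull_eq_top hS hy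
  refine ext_inner_right ℝ fun v => ?_
  refine LinearMap.congr_fun (LinearMap.ext_on (f := innerₛₗ ℝ y) (g := innerₛₗ ℝ z) hspan ?_) v
  intro p hp
  have hpz : p ∈ dualFace (convexHull ℝ S) z := hyz ▸ hp
  exact hp.2.trans hpz.2.symm

theorem finite_extremePoints_innerPolar_convexHull (hS : S.Finite) :
    ((innerPolar (convexHull ℝ S)).extremePoints ℝ).Finite :=
  Finite.of_injOn (t := {F | Convex ℝ F ∧ IsExtreme ℝ (convexHull ℝ S) F})
    (fun _ hy => ⟨(isExposed_dualFace hy.1).convex (convex_convexHull ℝ S),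
      (isExposed_dualFace hy.1).isExtreme⟩)
    (injOn_dualFace_extremePoints_innerPolar hS)
    (finite_setOf_convex_isExtreme_convexHull_s1 hS)

theorem nonempty_dualFace_convexHull [Nontrivial E] (hS : S.Finite)
    (hy : y ∈ (innerPolar (convexHull ℝ S)).extremePoints ℝ) :
    (dualFace (convexHull ℝ S) y).Nonempty := by
  by_contra! h
  have hspan := span_dualFace_convexHull_eq_top hS hy
  rw [h, Submodule.span_empty] at hspan
  exact bot_ne_top hspan

theorem finrank_vectorSpan_dualFace_add_one [Nontrivial E] (hS : S.Finite)
    (hy : y ∈ (innerPolar (convexHull ℝ S)).extremePoints ℝ) :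
    Module.finrank ℝ (vectorSpan ℝ (dualFace (convexHull ℝ S) y)) + 1 = Module.finrank ℝ E :=
  finrank_vectorSpan_add_one_of_span_eq_top (f := innerₛₗ ℝ y) (nonempty_dualFace_convexHull hS hy)
    (span_dualFace_convexHull_eq_top hS hy) fun _ hp => hp.2

end DualFacet

end Polar

section Facets

variable {n : ℕ} {S : Set (EuclideanSpace ℝ (Fin n))}

theorem isFaceOfDim_dualFace (hn : 0 < n) (hS : S.Finite) {y : EuclideanSpace ℝ (Fin n)}
    (hy : y ∈ (innerPolar (convexHull ℝ S)).extremePoints ℝ) :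
    IsFaceOfDim (convexHull ℝ S) (dualFace (convexHull ℝ S) y) (n - 1) := by
  have : NeZero n := ⟨hn.ne'⟩
  have hexp := isExposed_dualFace hy.1
  refine ⟨nonempty_dualFace_convexHull hS hy, hexp.convex (convex_convexHull ℝ S),
    hexp.isExtreme, ?_⟩
  have hdim := finrank_vectorSpan_dualFace_add_one hS hy
  rw [finrank_euclideanSpace_fin] at hdim
  omega

theorem ncard_extremePoints_innerPolar_le_ncard_facets (hn : 0 < n) (hS : S.Finite) :
    ((innerPolar (convexHull ℝ S)).extremePoints ℝ).ncard ≤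
      {F | IsFaceOfDim (convexHull ℝ S) F (n - 1)}.ncard :=
  ncard_le_ncard_of_injOn _ (fun _ => isFaceOfDim_dualFace hn hS)
    (injOn_dualFace_extremePoints_innerPolar hS)
    ((finite_setOf_convex_isExtreme_convexHull_s1 hS).subset fun _ hF => ⟨hF.2.1, hF.2.2.1⟩)

end Facets

section RademacherSums

theorem sum_exp_sum_units_smul {ι : Type*} [Fintype ι] [DecidableEq ι] (a : ι → ℝ) :
    ∑ ε : ι → ℤˣ, Real.exp (∑ i, ε i • a i) = ∏ i, 2 * Real.cosh (a i) := by
  simp_rw [Real.exp_sum]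
  rw [← Fintype.prod_sum fun i (u : ℤˣ) => Real.exp (u • a i)]
  refine Finset.prod_congr rfl fun i _ => ?_
  have hne : (1 : ℤˣ) ≠ -1 := by decide
  rw [UnitsInt.univ, Finset.sum_pair hne, one_smul, Units.neg_smul, one_smul, Real.cosh_eq]
  ring

variable {ι κ : Type*} [Fintype ι] [DecidableEq ι]

theorem sum_exp_sum_units_smul_le (a : ι → ℝ) :
    ∑ ε : ι → ℤˣ, Real.exp (∑ i, ε i • a i) ≤
      2 ^ Fintype.card ι * Real.exp ((∑ i, a i ^ 2) / 2) := by
  rw [sum_exp_sum_units_smul, Finset.prod_mul_distrib, Finset.prod_const, Finset.card_univ,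
    Finset.sum_div, Real.exp_sum]
  gcongr
  exact Real.cosh_le_exp_half_sq _

theorem card_filter_lt_sum_units_smul_lt {a : ι → ℝ} {σ t : ℝ} (hσ : 0 < σ) (ht : 0 < t)
    (ha : ∑ i, a i ^ 2 ≤ σ ^ 2) :
    ((Finset.univ.filter fun ε : ι → ℤˣ => t < ∑ i, ε i • a i).card : ℝ) <
      2 ^ Fintype.card ι * Real.exp (-(t ^ 2 / (2 * σ ^ 2))) := by
  -- Hoeffding's argument: Markov's inequality for `exp (l * X)` with the optimal `l`.
  set X : (ι → ℤˣ) → ℝ := fun ε => ∑ i, ε i • a i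
  set l : ℝ := t / σ ^ 2
  have : 0 < l := by positivity
  have hmarkov : ((Finset.univ.filter fun ε => t < X ε).card : ℝ) * Real.exp (l * t) <
      ∑ ε, Real.exp (l * X ε) := by
    rw [← nsmul_eq_mul, ← Finset.sum_const, Finset.sum_filter]
    refine Finset.sum_lt_sum_of_nonempty Finset.univ_nonempty fun ε _ => ?_
    split_ifs with h
    · gcongr
    · positivity
  have hmgf : ∑ ε, Real.exp (l * X ε) ≤
      2 ^ Fintype.card ι * Real.exp (l ^ 2 * σ ^ 2 / 2) := by
    have h := sum_exp_sum_units_smul_le fun i => l * a i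
    simp_rw [mul_pow, ← Finset.mul_sum, ← mul_smul_comm, ← Finset.mul_sum] at h
    exact h.trans (by gcongr)
  have hexp : l ^ 2 * σ ^ 2 / 2 = -(t ^ 2 / (2 * σ ^ 2)) + l * t := by
    simp only [l]
    field_simp
    ring
  rw [hexp, Real.exp_add, ← mul_assoc] at hmgf
  exact lt_of_mul_lt_mul_right (hmarkov.trans_le hmgf) (Real.exp_pos _).le

theorem mul_exp_neg_sq_sqrt_log_le_half {N : ℕ} (hN : 1 < N) {σ : ℝ} (hσ : 0 < σ) :
    N * Real.exp (-((2 * σ * √(Real.log N)) ^ 2 / (2 * σ ^ 2))) ≤ 1 / 2 := by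
  have hN' : (2 : ℝ) ≤ N := by exact_mod_cast hN
  have hsq : (2 * σ * √(Real.log N)) ^ 2 / (2 * σ ^ 2) = Real.log N + Real.log N := by
    rw [mul_pow, Real.sq_sqrt (Real.log_natCast_nonneg N)]
    field_simp
    ring
  rw [hsq, neg_add, Real.exp_add, Real.exp_neg, Real.exp_log (by positivity),
    mul_inv_cancel_left₀ (by positivity), one_div]
  exact inv_anti₀ two_pos hN'

theorem two_mul_card_filter_exists_lt_sum_units_smul_lt {s : Finset κ} (hs : 1 < s.card)
    {a : κ → ι → ℝ} {σ : ℝ} (hσ : 0 < σ) (ha : ∀ k ∈ s, ∑ i, a k i ^ 2 ≤ σ ^ 2) :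
    2 * (Finset.univ.filter fun ε : ι → ℤˣ =>
      ∃ k ∈ s, 2 * σ * √(Real.log s.card) < ∑ i, ε i • a k i).card < 2 ^ Fintype.card ι := by
  set t : ℝ := 2 * σ * √(Real.log s.card)
  have hs1 : (1 : ℝ) < s.card := by exact_mod_cast hs
  have ht : 0 < t := mul_pos (by positivity) (Real.sqrt_pos.2 (Real.log_pos hs1))
  have hunion : (Finset.univ.filter fun ε : ι → ℤˣ => ∃ k ∈ s, t < ∑ i, ε i • a k i) =
      s.biUnion fun k => Finset.univ.filter fun ε : ι → ℤˣ => t < ∑ i, ε i • a k i := by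
    ext ε
    simp
  have hcard : ((Finset.univ.filter fun ε : ι → ℤˣ => ∃ k ∈ s, t < ∑ i, ε i • a k i).card : ℝ) <
      2 ^ Fintype.card ι * (1 / 2) := by
    rw [hunion]
    calc _ ≤ ∑ k ∈ s, ((Finset.univ.filter fun ε : ι → ℤˣ => t < ∑ i, ε i • a k i).card : ℝ) := by
          exact_mod_cast Finset.card_biUnion_le
      _ < ∑ _k ∈ s, 2 ^ Fintype.card ι * Real.exp (-(t ^ 2 / (2 * σ ^ 2))) :=
          Finset.sum_lt_sum_of_nonempty (Finset.card_pos.1 (by omega)) fun k hk =>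
            card_filter_lt_sum_units_smul_lt hσ ht (ha k hk)
      _ = 2 ^ Fintype.card ι * (s.card * Real.exp (-(t ^ 2 / (2 * σ ^ 2)))) := by
          rw [Finset.sum_const, nsmul_eq_mul, mul_left_comm]
      _ ≤ 2 ^ Fintype.card ι * (1 / 2) := by
          gcongr
          exact mul_exp_neg_sq_sqrt_log_le_half hs hσ
  rw [mul_one_div, lt_div_iff₀' two_pos] at hcard
  exact_mod_cast hcard

end RademacherSums

section RandomSignVectors

variable {E : Type*} [NormedAddCommGroup E] [InnerProductSpace ℝ E]

theorem inner_sum_units_smul {ι : Type*} [Fintype ι] (v : E) (b : ι → E) (ε : ι → ℤˣ) :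
    inner ℝ v (∑ i, ε i • b i) = ∑ i, ε i • inner ℝ v (b i) := by
  simp only [inner_sum, Units.smul_def, inner_smul_right_eq_smul]

theorem norm_sq_sum_units_smul {ι : Type*} [Fintype ι] (b : OrthonormalBasis ι ℝ E)
    (ε : ι → ℤˣ) : ‖∑ i, ε i • b i‖ ^ 2 = Fintype.card ι := by
  classical
  have hcoord : ∀ i, inner ℝ (b i) (∑ j, ε j • b j) ^ 2 = (1 : ℝ) := fun i => by
    rw [inner_sum_units_smul, Finset.sum_eq_single i]
    · rcases Int.units_eq_one_or (ε i) with h | h <;> simp [h]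
    · intro j _ hji
      simp [b.inner_eq_zero hji.symm]
    · simp
  rw [← b.sum_sq_inner_right]
  simp [hcoord]

theorem exists_norm_sq_eq_finrank_and_inner_le [FiniteDimensional ℝ E] {A B : Set E} {α β : ℝ}
    (hα : 0 < α) (hβ : 0 < β) (hA : 1 < A.ncard) (hB : 1 < B.ncard)
    (hAα : A ⊆ closedBall 0 α) (hBβ : B ⊆ closedBall 0 β) :
    ∃ x : E, ‖x‖ ^ 2 = Module.finrank ℝ E ∧
      (∀ v ∈ A, inner ℝ v x ≤ 2 * α * √(Real.log A.ncard)) ∧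
      ∀ v ∈ B, inner ℝ v x ≤ 2 * β * √(Real.log B.ncard) := by
  lift A to Finset E using finite_of_ncard_pos (by omega)
  lift B to Finset E using finite_of_ncard_pos (by omega)
  simp only [ncard_coe_finset, Finset.mem_coe] at *
  let b := stdOrthonormalBasis ℝ E
  have hcoord : ∀ {C : Finset E} {γ : ℝ}, (C : Set E) ⊆ closedBall 0 γ →
      ∀ v ∈ C, ∑ i, inner ℝ v (b i) ^ 2 ≤ γ ^ 2 := fun hC v hv => by
    rw [b.sum_sq_inner_left]
    gcongr
    simpa using hC hv
  have hbadA := two_mul_card_filter_exists_lt_sum_units_smul_lt hA hα (hcoord hAα)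
  have hbadB := two_mul_card_filter_exists_lt_sum_units_smul_lt hB hβ (hcoord hBβ)
  simp_rw [← inner_sum_units_smul] at hbadA hbadB
  set badA := Finset.univ.filter fun ε : Fin (Module.finrank ℝ E) → ℤˣ =>
    ∃ v ∈ A, 2 * α * √(Real.log A.card) < inner ℝ v (∑ i, ε i • b i) with badA_def
  set badB := Finset.univ.filter fun ε : Fin (Module.finrank ℝ E) → ℤˣ =>
    ∃ v ∈ B, 2 * β * √(Real.log B.card) < inner ℝ v (∑ i, ε i • b i) with badB_def
  have hcard : (badA ∪ badB).card <
      (Finset.univ : Finset (Fin (Module.finrank ℝ E) → ℤˣ)).card := by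
    have hunion := Finset.card_union_le badA badB
    rw [Finset.card_univ, Fintype.card_fun, Fintype.card_units_int]
    omega
  obtain ⟨ε, -, hε⟩ := Finset.exists_mem_notMem_of_card_lt_card hcard
  simp only [badA_def, badB_def, Finset.mem_union, Finset.mem_filter_univ, not_or, not_exists,
    not_and, not_lt] at hε
  exact ⟨∑ i, ε i • b i, by simp [norm_sq_sum_units_smul], hε⟩

end RandomSignVectors

section VerticesOfPolars

variable {E : Type*} [NormedAddCommGroup E] [InnerProductSpace ℝ E] [FiniteDimensional ℝ E]
  [Nontrivial E] {K : Set E} {r R : ℝ}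

theorem sq_finrank_mul_div_le_log_mul_log (hK : IsCompact K) (hKc : Convex ℝ K) (hr : 0 < r)
    (hrK : closedBall 0 r ⊆ K) (hKR : K ⊆ closedBall 0 R) (hfin : (K.extremePoints ℝ).Finite)
    (hfinPolar : ((innerPolar K).extremePoints ℝ).Finite) :
    (Module.finrank ℝ E * r / R) ^ 2 ≤ 16 * (Real.log (K.extremePoints ℝ).ncard *
      Real.log ((innerPolar K).extremePoints ℝ).ncard) := by
  have hR : 0 < R := by
    by_contra! h
    exact ((nontrivial_closedBall hr).mono (hrK.trans hKR)).not_subsingleton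
      (subsingleton_closedBall 0 h)
  have hKr : innerPolar K ⊆ closedBall 0 r⁻¹ := innerPolar_subset_closedBall hr hrK
  have hRK : closedBall 0 R⁻¹ ⊆ innerPolar K := closedBall_subset_innerPolar hR hKR
  have hM := one_lt_ncard_extremePoints hK hKc hfin ((nontrivial_closedBall hr).mono hrK)
  have hN := one_lt_ncard_extremePoints (isCompact_innerPolar hr hrK) convex_innerPolar hfinPolar
    ((nontrivial_closedBall (inv_pos.2 hR)).mono hRK)
  obtain ⟨x, hx, hxK, hxPolar⟩ := exists_norm_sq_eq_finrank_and_inner_le hR (inv_pos.2 hr) hM hN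
    (extremePoints_subset.trans hKR) (extremePoints_subset.trans hKr)
  set M := (K.extremePoints ℝ).ncard
  set N := ((innerPolar K).extremePoints ℝ).ncard
  have hlogM : 0 ≤ Real.log M := Real.log_natCast_nonneg M
  have hlogN : 0 < Real.log N := Real.log_pos (by exact_mod_cast hN)
  have hdim : (Module.finrank ℝ E : ℝ) ≤ 2 * R * √(Real.log M) * (2 * r⁻¹ * √(Real.log N)) := by
    rw [← hx]
    exact norm_sq_le_mul_of_forall_inner_le hKc hK.isClosed (hrK (by simp [hr.le])) (by positivity)
      (le_of_forall_mem_extremePoints_le hK hKc ((innerSL ℝ).flip x) hxK)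
      (le_of_forall_mem_extremePoints_le (isCompact_innerPolar hr hrK) convex_innerPolar
        ((innerSL ℝ).flip x) hxPolar)
  calc (Module.finrank ℝ E * r / R) ^ 2
      ≤ (2 * R * √(Real.log M) * (2 * r⁻¹ * √(Real.log N)) * r / R) ^ 2 := by gcongr
    _ = 16 * (√(Real.log M) ^ 2 * √(Real.log N) ^ 2) := by field_simp; ring
    _ = 16 * (Real.log M * Real.log N) := by rw [Real.sq_sqrt hlogM, Real.sq_sqrt hlogN.le]

end VerticesOfPolars

theorem flm_ball_sandwich_general {n : ℕ} (hn : 0 < n) {S : Set (EuclideanSpace ℝ (Fin n))}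
    (hS : S.Finite) {r R : ℝ} (hr : 0 < r) (hrS : closedBall 0 r ⊆ convexHull ℝ S)
    (hSR : convexHull ℝ S ⊆ closedBall 0 R) :
    (n * r / R) ^ 2 ≤ 16 * (Real.log ((convexHull ℝ S).extremePoints ℝ).ncard *
      Real.log {F | IsFaceOfDim (convexHull ℝ S) F (n - 1)}.ncard) := by
  have : NeZero n := ⟨hn.ne'⟩
  have hcompact : IsCompact (convexHull ℝ S) := hS.isCompact_convexHull ℝ
  have hpolar := sq_finrank_mul_div_le_log_mul_log hcompact (convex_convexHull ℝ S) hr hrS hSR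
    (hS.subset extremePoints_convexHull_subset) (finite_extremePoints_innerPolar_convexHull hS)
  have hpos : 0 < ((innerPolar (convexHull ℝ S)).extremePoints ℝ).ncard :=
    (ncard_pos (finite_extremePoints_innerPolar_convexHull hS)).2
      ((isCompact_innerPolar hr hrS).extremePoints_nonempty ⟨0, fun _ _ => by simp⟩)
  have hfacets := ncard_extremePoints_innerPolar_le_ncard_facets hn hS
  rw [finrank_euclideanSpace_fin] at hpolar
  refine hpolar.trans ?_
  gcongr

/-- **Figiel–Lindenstrauss–Milman** for polytopes between `B_n` and `√n · B_n`:
there is an absolute constant `c > 0` such that every convex polytope `P ⊆ ℝⁿ` with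
`B_n ⊆ P ⊆ √n · B_n` satisfies `log |V| * log |𝓕| ≥ c * n`, where `V` is the set of
vertices and `𝓕` the set of facets of `P`. -/
theorem flm_ball_sandwich :
    ∃ c : ℝ, 0 < c ∧
      ∀ (n : ℕ), 0 < n →
        ∀ S : Finset (EuclideanSpace ℝ (Fin n)),
          ∀ P : Set (EuclideanSpace ℝ (Fin n)), P = convexHull ℝ (S : Set (EuclideanSpace ℝ (Fin n))) →
            closedBall (0 : EuclideanSpace ℝ (Fin n)) 1 ⊆ P →
            P ⊆ closedBall (0 : EuclideanSpace ℝ (Fin n)) (Real.sqrt n) →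
              Real.log ((Set.extremePoints ℝ P).ncard) *
                  Real.log ({F : Set (EuclideanSpace ℝ (Fin n)) | IsFaceOfDim P F (n - 1)}.ncard)
                ≥ c * n := by
  refine ⟨1 / 16, by norm_num, ?_⟩
  rintro n hn S P rfl hB hR
  have h := flm_ball_sandwich_general hn S.finite_toSet one_pos hB hR
  rw [mul_one, Real.div_sqrt, Real.sq_sqrt n.cast_nonneg] at h
  linarith
end
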